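/- Let (L_k)_{k≥1} be an increasing sequence of positive integers tending to infinity. Then there exist a real number ν with 0 < ν < 1/2 and sequences (p_k)_{k≥1}, (q_k)_{k≥1} of positive integers such that the three real numbers e, 1, ν are linearly independent over ℚ, and for every k ≥ 1 one has |q_k·ν − p_k − e| ≤ Δ(p_k,q_k)^{(p_k+q_k)·L_k}, where Δ(p_k,q_k) denotes the minimum of 1/2 and of all values |q·ν − p − r·e| over triples of integers (p,q,r) with 0 < |r| + |q| < 3(q_k+1) and (p,q,r) ∉ {(0,0,0), (p_k,q_k,1), −(p_k,q_k,1), 2(p_k,q_k,1), −2(p_k,q_k,1)}. -/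

import Mathlib

/-!
The condition `|q ν - p - ξ| ≤ Δ(p, q) ^ N` holds on a whole neighbourhood of `ν₀ = (p + ξ) / q`:
at `ν₀` the left-hand side vanishes, whereas for irrational `ξ` the only linear forms
`Q ν₀ - P - R ξ` that vanish come from the multiples of `(p, q, 1)`, and those of size
`|R| + |Q| < 3 (q + 1)` are exactly the excluded ones, so that `Δ(p, q)` stays bounded away from
zero near `ν₀`. The points `(p + ξ) / q` are dense in `(0, ∞)`, so for each `k` the admissible `ν`
contain a dense open subset of `(0, ∞)`. The countably many rational relations to avoid each exclude
at most one value of `ν`, and Baire's theorem provides a `ν` meeting all the conditions at once.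
-/

open Filter Topology Set
open scoped Nat

theorem irrational_of_forall_exists_abs_lt {x : ℝ}
    (h : ∀ b : ℕ, 0 < b → ∃ m n : ℤ, 0 < |m * x - n| ∧ b * |m * x - n| < 1) : Irrational x := by
  rintro ⟨r, rfl⟩
  obtain ⟨m, n, hpos, hlt⟩ := h r.den r.pos
  have hnum : (m * (r : ℝ) - n) * r.den = (m * r.num - n * r.den : ℤ) := by
    have hr : (r : ℝ) * r.den = r.num := mod_cast r.mul_den_eq_num
    push_cast
    rw [← hr]
    ring
  have habs : (r.den : ℝ) * |m * (r : ℝ) - n| = (|m * r.num - n * r.den| : ℤ) := by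
    rw [Int.cast_abs, ← hnum, abs_mul, Nat.abs_cast, mul_comm]
  have hpos' : 0 < (r.den : ℝ) * |m * (r : ℝ) - n| := mul_pos (mod_cast r.pos) hpos
  rw [habs] at hlt hpos'
  norm_cast at hlt hpos'
  omega

theorem cast_sum_factorial_div_factorial (N : ℕ) :
    ((∑ k ∈ Finset.range (N + 1), N ! / k ! : ℕ) : ℝ)
      = N ! * ∑ k ∈ Finset.range (N + 1), 1 / (k ! : ℝ) := by
  rw [Nat.cast_sum, Finset.mul_sum]
  refine Finset.sum_congr rfl fun k hk => ?_
  have hkN : k ≤ N := Nat.lt_succ_iff.1 (Finset.mem_range.1 hk)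
  rw [Nat.cast_div (Nat.factorial_dvd_factorial hkN) (by positivity), mul_one_div]

theorem sum_one_div_factorial_lt_exp_one (N : ℕ) :
    ∑ k ∈ Finset.range N, 1 / (k ! : ℝ) < Real.exp 1 := by
  have hle := Real.sum_le_exp_of_nonneg zero_le_one (N + 1)
  simp only [one_pow, Finset.sum_range_succ] at hle
  exact (lt_add_of_pos_right _ (by positivity)).trans_le hle

theorem mul_factorial_mul_exp_one_sub_sum_lt_one (N : ℕ) :
    N * (N ! * (Real.exp 1 - ∑ k ∈ Finset.range (N + 1), 1 / (k ! : ℝ))) < 1 := by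
  have hbound := Real.exp_bound' zero_le_one le_rfl N.succ_pos
  simp only [one_pow, one_mul, Nat.succ_eq_add_one] at hbound
  calc N * (N ! * (Real.exp 1 - ∑ k ∈ Finset.range (N + 1), 1 / (k ! : ℝ)))
      ≤ N * (N ! * (((N + 1 : ℕ) + 1) / ((N + 1)! * (N + 1 : ℕ)))) := by
        gcongr
        exact sub_le_iff_le_add'.2 hbound
    _ = N * (N + 2) / (N + 1) ^ 2 := by
        rw [Nat.factorial_succ]
        push_cast
        field_simp
        ring
    _ < 1 := by
        rw [div_lt_one (by positivity)]
        linarith [add_sq (N : ℝ) 1]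

theorem irrational_exp_one : Irrational (Real.exp 1) := by
  refine irrational_of_forall_exists_abs_lt fun N _ =>
    ⟨(N ! : ℕ), (∑ k ∈ Finset.range (N + 1), N ! / k ! : ℕ), ?_⟩
  have hpos : 0 < N ! * (Real.exp 1 - ∑ k ∈ Finset.range (N + 1), 1 / (k ! : ℝ)) :=
    mul_pos (by positivity) (sub_pos.2 (sum_one_div_factorial_lt_exp_one _))
  rw [Int.cast_natCast, Int.cast_natCast, cast_sum_factorial_div_factorial, ← mul_sub,
    abs_of_pos hpos]
  exact ⟨hpos, mul_factorial_mul_exp_one_sub_sum_lt_one N⟩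

/-- The minimum `Δ(p, q)` of `1/2` and of the values `|Q ν - P - R ξ|` over the integer triples
`(P, Q, R)` with `0 < |R| + |Q| < 3 (q + 1)` other than `0`, `±(p, q, 1)` and `±2 (p, q, 1)`. The
set below is nonempty and bounded below by `0`, so `sInf` takes no junk value. -/
noncomputable def linearFormGap (ξ ν : ℝ) (p q : ℕ) : ℝ :=
  sInf (insert (1 / 2 : ℝ)
    {x : ℝ | ∃ P Q R : ℤ, 0 < |R| + |Q| ∧ |R| + |Q| < 3 * ((q : ℤ) + 1) ∧
      (P, Q, R) ≠ (0, 0, 0) ∧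
      (P, Q, R) ≠ ((p : ℤ), (q : ℤ), 1) ∧
      (P, Q, R) ≠ (-(p : ℤ), -(q : ℤ), -1) ∧
      (P, Q, R) ≠ (2 * (p : ℤ), 2 * (q : ℤ), 2) ∧
      (P, Q, R) ≠ (-(2 * (p : ℤ)), -(2 * (q : ℤ)), -2) ∧
      x = |(Q : ℝ) * ν - (P : ℝ) - (R : ℝ) * ξ|})

theorem le_linearFormGap {ξ ν m : ℝ} {p q : ℕ} (hm : m ≤ 1 / 2)
    (h : ∀ P Q R : ℤ, |R| + |Q| < 3 * ((q : ℤ) + 1) → ¬(P = R * p ∧ Q = R * q) →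
      m ≤ |(Q : ℝ) * ν - P - R * ξ|) :
    m ≤ linearFormGap ξ ν p q := by
  refine le_csInf (insert_nonempty _ _) ?_
  rintro x (rfl | ⟨P, Q, R, -, hsize, hne_zero, hne_one, hne_neg_one, hne_two, hne_neg_two, rfl⟩)
  · exact hm
  refine h P Q R hsize ?_
  rintro ⟨rfl, rfl⟩
  have hR : |R| < 3 := by
    rw [abs_mul, Nat.abs_cast] at hsize
    exact lt_of_mul_lt_mul_right (by linarith) (by positivity : (0 : ℤ) ≤ q + 1)
  obtain ⟨hlow, hupp⟩ := abs_lt.1 hR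
  interval_cases R <;> simp_all

theorem eq_zero_of_irrational_of_mul_add_eq_zero {ξ : ℝ} (hξ : Irrational ξ) {a b : ℤ}
    (h : a * ξ + b = 0) : a = 0 ∧ b = 0 := by
  have ha : a = 0 := by
    by_contra ha
    exact ((hξ.intCast_mul ha).add_intCast b).ne_zero h
  exact ⟨ha, by simpa [ha] using h⟩

theorem eq_mul_of_irrational_of_linear_form_eq {ξ : ℝ} (hξ : Irrational ξ) {p q : ℕ} (hq : q ≠ 0)
    {P Q R : ℤ} (h : Q * ((p + ξ) / q) - R * ξ = P) : P = R * p ∧ Q = R * q := by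
  have hrel : ((Q - R * q : ℤ) : ℝ) * ξ + (Q * p - P * q : ℤ) = 0 := by
    push_cast
    rw [← h]
    field_simp
    ring
  obtain ⟨hQ, hP⟩ := eq_zero_of_irrational_of_mul_add_eq_zero hξ hrel
  have hQ' : Q = R * q := sub_eq_zero.1 hQ
  refine ⟨mul_right_cancel₀ (Nat.cast_ne_zero.2 hq : (q : ℤ) ≠ 0) ?_, hQ'⟩
  rw [hQ'] at hP
  linarith

theorem eventually_le_abs_sub_intCast (y : ℝ) :
    ∀ᶠ δ : ℝ in 𝓝[>] 0, ∀ᶠ t : ℝ in 𝓝 y, ∀ n : ℤ, y ≠ n → δ ≤ |t - n| := by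
  have hclosed : IsClosed (((↑) : ℤ → ℝ) '' {n | y ≠ n}) :=
    Int.isClosedEmbedding_coe_real.isClosedMap _ (isClosed_discrete _)
  have hy : y ∉ ((↑) : ℤ → ℝ) '' {n | y ≠ n} := fun ⟨_, hn, hyn⟩ => hn hyn.symm
  obtain ⟨ε, hε, hball⟩ := Metric.isOpen_iff.1 hclosed.isOpen_compl y hy
  filter_upwards [Ioo_mem_nhdsGT (half_pos hε)] with δ hδ
  filter_upwards [Metric.ball_mem_nhds y (half_pos hε)] with t ht n hn
  have hyn : ε ≤ |(n : ℝ) - y| := not_lt.1 fun hlt => hball hlt ⟨n, hn, rfl⟩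
  have hty : |t - y| < ε / 2 := ht
  have htri := abs_sub_le (n : ℝ) t y
  rw [abs_sub_comm (n : ℝ) t] at htri
  linarith [hδ.2]

theorem exists_pos_eventually_le_linearFormGap {ξ : ℝ} (hξ : Irrational ξ) (p : ℕ) {q : ℕ}
    (hq : q ≠ 0) : ∃ δ > 0, ∀ᶠ ν in 𝓝 ((p + ξ) / q), δ ≤ linearFormGap ξ ν p q := by
  set ν₀ := (p + ξ) / q
  set B : ℤ := 3 * ((q : ℤ) + 1)
  let box : Finset (ℤ × ℤ) := Finset.Icc (-B) B ×ˢ Finset.Icc (-B) B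
  have hbox : ∀ᶠ δ : ℝ in 𝓝[>] 0, ∀ s ∈ box, ∀ᶠ ν : ℝ in 𝓝 ν₀,
      ∀ P : ℤ, s.1 * ν₀ - s.2 * ξ ≠ P → δ ≤ |s.1 * ν - s.2 * ξ - P| := by
    refine (eventually_all_finset box).2 fun s _ => ?_
    have hcont : Continuous fun ν : ℝ => s.1 * ν - s.2 * ξ := by fun_prop
    filter_upwards [eventually_le_abs_sub_intCast (s.1 * ν₀ - s.2 * ξ)] with δ hδ
    exact (hcont.tendsto ν₀).eventually hδ
  obtain ⟨δ, hδbox, hδpos, hδhalf⟩ :=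
    (hbox.and (Ioo_mem_nhdsGT (by norm_num : (0 : ℝ) < 1 / 2))).exists
  refine ⟨δ, hδpos, ?_⟩
  filter_upwards [(eventually_all_finset box).2 hδbox] with ν hν
  refine le_linearFormGap hδhalf.le fun P Q R hsize hnot => ?_
  have hmem : (Q, R) ∈ box :=
    Finset.mem_product.2
      ⟨Finset.mem_Icc.2 (abs_le.1 (by linarith [abs_nonneg R])),
        Finset.mem_Icc.2 (abs_le.1 (by linarith [abs_nonneg Q]))⟩
  have hle := hν (Q, R) hmem P fun h => hnot (eq_mul_of_irrational_of_linear_form_eq hξ hq h)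
  rwa [sub_right_comm] at hle

theorem eventually_abs_le_linearFormGap_pow {ξ : ℝ} (hξ : Irrational ξ) (p : ℕ) {q : ℕ}
    (hq : q ≠ 0) (N : ℕ) :
    ∀ᶠ ν in 𝓝 ((p + ξ) / q), |q * ν - p - ξ| ≤ linearFormGap ξ ν p q ^ N := by
  obtain ⟨δ, hδ, hgap⟩ := exists_pos_eventually_le_linearFormGap hξ p hq
  have hzero : |q * ((p + ξ) / q) - p - ξ| < δ ^ N := by
    rw [mul_div_cancel₀ _ (Nat.cast_ne_zero.2 hq), add_sub_cancel_left, sub_self, abs_zero]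
    positivity
  have hcont : Continuous fun ν : ℝ => |q * ν - p - ξ| := by fun_prop
  filter_upwards [hgap, (hcont.tendsto _).eventually_lt_const hzero] with ν hν hlt
  exact hlt.le.trans (pow_le_pow_left₀ hδ.le hν N)

theorem tendsto_floor_add_one_add_div_atTop (ξ : ℝ) {x : ℝ} (hx : 0 ≤ x) :
    Tendsto (fun q : ℕ => (((⌊x * q⌋₊ + 1 : ℕ) : ℝ) + ξ) / q) atTop (𝓝 x) := by
  have hfloor : Tendsto (fun q : ℕ => (⌊x * q⌋₊ : ℝ) / q) atTop (𝓝 x) :=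
    (tendsto_nat_floor_mul_div_atTop hx).comp tendsto_natCast_atTop_atTop
  have hsum := hfloor.add (tendsto_const_div_atTop_nhds_zero_nat (1 + ξ))
  rw [add_zero] at hsum
  refine hsum.congr fun q => ?_
  push_cast
  ring

theorem eventually_residual_exists_abs_le_linearFormGap_pow {ξ : ℝ} (hξ : Irrational ξ)
    (N : ℕ → ℕ → ℕ) :
    ∀ᶠ ν in residual ℝ, 0 < ν →
      ∃ p q : ℕ, 0 < p ∧ 0 < q ∧ |q * ν - p - ξ| ≤ linearFormGap ξ ν p q ^ N p q := by
  set good : Set ℝ :=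
    {ν | ∃ p q : ℕ, 0 < p ∧ 0 < q ∧ |q * ν - p - ξ| ≤ linearFormGap ξ ν p q ^ N p q}
  have hdense : Dense (interior good ∪ Iio 0) := fun x => by
    rcases lt_or_ge x 0 with hx | hx
    · exact subset_closure (.inr hx)
    refine mem_closure_of_tendsto (tendsto_floor_add_one_add_div_atTop ξ hx) ?_
    filter_upwards [eventually_gt_atTop 0] with q hq
    refine .inl (mem_interior_iff_mem_nhds.2 ?_)
    filter_upwards [eventually_abs_le_linearFormGap_pow hξ _ hq.ne' (N (⌊x * q⌋₊ + 1) q)] with ν hν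
    exact ⟨_, q, Nat.succ_pos _, hq, hν⟩
  filter_upwards [residual_of_dense_open (isOpen_interior.union isOpen_Iio) hdense] with ν hν hpos
  exact interior_subset (s := good) (hν.resolve_right hpos.not_gt)

theorem eventually_residual_int_linear_independent {ξ : ℝ} (hξ : Irrational ξ) :
    ∀ᶠ ν in residual ℝ, ∀ a b c : ℤ, a * ξ + b + c * ν = 0 → a = 0 ∧ b = 0 ∧ c = 0 := by
  simp only [eventually_countable_forall]
  intro a b c
  rcases eq_or_ne c 0 with rfl | hc
  · refine .of_forall fun ν h => ?_
    obtain ⟨ha, hb⟩ := eq_zero_of_irrational_of_mul_add_eq_zero hξ (by simpa using h)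
    exact ⟨ha, hb, rfl⟩
  · filter_upwards [residual_of_dense_open isOpen_compl_singleton
      (dense_compl_singleton (-(a * ξ + b) / c))] with ν hν h
    refine absurd ?_ hν
    rw [mem_singleton_iff, eq_div_iff (Int.cast_ne_zero.2 hc)]
    linarith

theorem stmt_0_general {ξ : ℝ} (hξ : Irrational ξ) (N : ℕ → ℕ → ℕ → ℕ) {U : Set ℝ}
    (hU : IsOpen U) (hUpos : (U ∩ Ioi 0).Nonempty) :
    ∃ (ν : ℝ) (p q : ℕ → ℕ), 0 < ν ∧ ν ∈ U ∧
      (∀ a b c : ℤ, a * ξ + b + c * ν = 0 → a = 0 ∧ b = 0 ∧ c = 0) ∧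
      ∀ k, 0 < p k ∧ 0 < q k ∧
        |q k * ν - p k - ξ| ≤ linearFormGap ξ ν (p k) (q k) ^ N k (p k) (q k) := by
  have happrox := eventually_countable_forall.2 fun k =>
    eventually_residual_exists_abs_le_linearFormGap_pow hξ (N k)
  obtain ⟨ν, ⟨hνU, hν⟩, hindep, hpq⟩ :=
    (dense_of_mem_residual ((eventually_residual_int_linear_independent hξ).and happrox)
      ).inter_open_nonempty _ (hU.inter isOpen_Ioi) hUpos
  choose p q hpq using fun k => hpq k hν
  exact ⟨ν, p, q, hν, hνU, hindep, hpq⟩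

/-- Given an increasing sequence `(L_k)` of positive integers tending to infinity, there exist
`ν ∈ (0,1/2)` and sequences `(p_k)`, `(q_k)` of positive integers such that `e, 1, ν` are
linearly independent over `ℚ` and `|q_k ν − p_k − e| ≤ Δ(p_k,q_k)^{(p_k+q_k)L_k}`, where
`Δ(p_k,q_k)` is the minimum of `1/2` and of all `|qν − p − re|` over integer triples `(p,q,r)`
with `0 < |r|+|q| < 3(q_k+1)` and `(p,q,r) ∉ {0, ±(p_k,q_k,1), ±2(p_k,q_k,1)}`. -/
theorem stmt_0 (L : ℕ → ℕ) (hLpos : ∀ k, 0 < L k) (hLmono : Monotone L)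
    (hLtop : Filter.Tendsto L Filter.atTop Filter.atTop) :
    ∃ (ν : ℝ) (p q : ℕ → ℕ), 0 < ν ∧ ν < 1 / 2 ∧
      (∀ a b c : ℤ, (a : ℝ) * Real.exp 1 + (b : ℝ) + (c : ℝ) * ν = 0 →
        a = 0 ∧ b = 0 ∧ c = 0) ∧
      ∀ k : ℕ, 1 ≤ k → 0 < p k ∧ 0 < q k ∧
        |(q k : ℝ) * ν - (p k : ℝ) - Real.exp 1| ≤
          (sInf (insert (1 / 2 : ℝ)
            {x : ℝ | ∃ P Q R : ℤ, 0 < |R| + |Q| ∧ |R| + |Q| < 3 * ((q k : ℤ) + 1) ∧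
              (P, Q, R) ≠ (0, 0, 0) ∧
              (P, Q, R) ≠ ((p k : ℤ), (q k : ℤ), 1) ∧
              (P, Q, R) ≠ (-(p k : ℤ), -(q k : ℤ), -1) ∧
              (P, Q, R) ≠ (2 * (p k : ℤ), 2 * (q k : ℤ), 2) ∧
              (P, Q, R) ≠ (-(2 * (p k : ℤ)), -(2 * (q k : ℤ)), -2) ∧
              x = |(Q : ℝ) * ν - (P : ℝ) - (R : ℝ) * Real.exp 1|})) ^ ((p k + q k) * L k) := by
  obtain ⟨ν, p, q, hpos, hlt, hindep, happrox⟩ := stmt_0_general irrational_exp_one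
    (fun k p q => (p + q) * L k) (isOpen_Iio (a := 1 / 2)) ⟨1 / 4, by norm_num, by norm_num⟩
  exact ⟨ν, p, q, hpos, hlt, hindep, fun k _ => happrox k⟩
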